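/- arXiv:2211.09629 — 2 statements merged into one kernel-verified Lean document; each statement's English description precedes it below -/
import Mathlib

section
/- Fix reals $a>0$, $\tilde h>0$, $M>0$, $N>0$ and $\bar K\ge 0$. For $\varepsilon>0$ and $t\ge 0$, define $\bar a_1 := 1+N\tilde h$, $\bar b_1 := a+\varepsilon(1+\bar K)$, $\bar a_2 := a(1+\bar K)-\tilde h M+\varepsilon\bar K$, $\bar b_2 := a+\varepsilon$. Consider the condition (i) for all $\varepsilon>0$ and all $t\ge 0$, $\; t\,\bar b_2(\bar a_1\bar b_1-\bar b_2)+\bar b_1(\bar a_2\bar b_1-\varepsilon a\bar K)>0$. If $\bar K>0$, then (i) is equivalent to (ii) $a(1+\bar K)\ge\tilde h M$. If $\bar K=0$, then (i) is equivalent to the strict inequality $a(1+\bar K)>\tilde h M$, that is, $a>\tilde h M$. -/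
namespace LandscapeHurwitz

/-- `ā₁ = 1 + N h̃`. -/
def a₁ (h N : ℝ) : ℝ := 1 + N * h

/-- `b̄₁ = a + ε (1 + K̄)`. -/
def b₁ (a K ε : ℝ) : ℝ := a + ε * (1 + K)

/-- `ā₂ = a (1 + K̄) − h̃ M + ε K̄`. -/
def a₂ (a h M K ε : ℝ) : ℝ := a * (1 + K) - h * M + ε * K

/-- `b̄₂ = a + ε`. -/
def b₂ (a ε : ℝ) : ℝ := a + ε

/-- The quantity `Δ₄ / ε = t b̄₂ (ā₁ b̄₁ − b̄₂) + b̄₁ (ā₂ b̄₁ − ε a K̄)`. -/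
def reducedDelta4 (a h M N K ε t : ℝ) : ℝ :=
  t * b₂ a ε * (a₁ h N * b₁ a K ε - b₂ a ε) +
    b₁ a K ε * (a₂ a h M K ε * b₁ a K ε - ε * a * K)

end LandscapeHurwitz

namespace LandscapeHurwitz

/-- Normal form of the reduced determinant, in which the terms linear in `ε a K` cancel. -/
theorem reducedDelta4_eq (a h M N K ε t : ℝ) :
    reducedDelta4 a h M N K ε t =
      t * b₂ a ε * (ε * K + N * h * b₁ a K ε) +
        b₁ a K ε * ((a * (1 + K) - h * M) * b₁ a K ε + ε ^ 2 * (K * (1 + K))) := by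
  simp only [reducedDelta4, a₁, b₁, a₂, b₂]
  ring

theorem b₁_pos {a K ε : ℝ} (ha : 0 < a) (hK : 0 ≤ K) (hε : 0 < ε) : 0 < b₁ a K ε := by
  unfold b₁
  positivity

/-- The reduced determinant is positive for all `t ≥ 0` iff its factor at `t = 0` is. -/
theorem forall_reducedDelta4_pos_iff {a h N K ε : ℝ} (M : ℝ) (ha : 0 < a) (hh : 0 < h)
    (hN : 0 < N) (hK : 0 ≤ K) (hε : 0 < ε) :
    (∀ t : ℝ, 0 ≤ t → 0 < reducedDelta4 a h M N K ε t) ↔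
      0 < (a * (1 + K) - h * M) * b₁ a K ε + ε ^ 2 * (K * (1 + K)) := by
  have hb₁ := b₁_pos ha hK hε
  have hb₂ : 0 < b₂ a ε := add_pos ha hε
  constructor
  · intro H
    have H₀ := H 0 le_rfl
    rw [reducedDelta4_eq, zero_mul, zero_mul, zero_add] at H₀
    exact pos_of_mul_pos_right H₀ hb₁.le
  · intro H t ht
    rw [reducedDelta4_eq]
    exact add_pos_of_nonneg_of_pos (by positivity) (mul_pos hb₁ H)

end LandscapeHurwitz

open LandscapeHurwitz in
/-- For `K̄ > 0` positivity for all `ε > 0`, `t ≥ 0` is equivalent to `a (1 + K̄) ≥ h̃ M`;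
for `K̄ = 0` it is equivalent to the strict inequality. -/
theorem hurwitz_delta4_pos_iff (a h M N K : ℝ)
    (ha : 0 < a) (hh : 0 < h) (hM : 0 < M) (hN : 0 < N) :
    (0 < K →
      ((∀ ε : ℝ, 0 < ε → ∀ t : ℝ, 0 ≤ t →
          0 < LandscapeHurwitz.reducedDelta4 a h M N K ε t) ↔
        a * (1 + K) ≥ h * M)) ∧
    (K = 0 →
      ((∀ ε : ℝ, 0 < ε → ∀ t : ℝ, 0 ≤ t →
          0 < LandscapeHurwitz.reducedDelta4 a h M N K ε t) ↔
        a * (1 + K) > h * M)) := by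
  refine ⟨fun hK => ⟨fun H => ?_, fun hd ε hε => ?_⟩, fun hK => ⟨fun H => ?_, fun hd ε hε => ?_⟩⟩
  · by_contra! hlt
    -- at `ε = (h M - a (1 + K)) / K` the factor equals `a (a (1 + K) - h M) < 0`
    have hε : 0 < (h * M - a * (1 + K)) / K := div_pos (sub_pos.2 hlt) hK
    have key := (forall_reducedDelta4_pos_iff M ha hh hN hK.le hε).1 (H _ hε)
    have heq : (a * (1 + K) - h * M) * b₁ a K ((h * M - a * (1 + K)) / K) +
        ((h * M - a * (1 + K)) / K) ^ 2 * (K * (1 + K)) = a * (a * (1 + K) - h * M) := by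
      unfold b₁
      field_simp
      ring
    rw [heq] at key
    exact absurd (pos_of_mul_pos_right key ha.le) (by linarith)
  · rw [forall_reducedDelta4_pos_iff M ha hh hN hK.le hε]
    have hb₁ := b₁_pos ha hK.le hε
    exact add_pos_of_nonneg_of_pos (mul_nonneg (sub_nonneg.2 hd) hb₁.le) (by positivity)
  · have key := (forall_reducedDelta4_pos_iff M ha hh hN hK.ge one_pos).1 (H 1 one_pos)
    have hK₀ : (1 : ℝ) ^ 2 * (K * (1 + K)) = 0 := by simp [hK]
    rw [hK₀, add_zero] at key
    exact sub_pos.1 (pos_of_mul_pos_left key (b₁_pos ha hK.ge one_pos).le)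
  · rw [forall_reducedDelta4_pos_iff M ha hh hN hK.ge hε]
    have hb₁ := b₁_pos ha hK.ge hε
    exact add_pos_of_pos_of_nonneg (mul_pos (sub_pos.2 hd) hb₁) (by simp [hK])
end

section
/- Fix reals $a > 0$, $\tilde h > 0$, $M > 0$, $N > 0$, $\bar\xi \in \mathbb{R}$ and $\varepsilon > 0$. Consider the monic cubic $Q(\lambda) = \lambda^3 + (a_1+ib_1)\lambda^2 + (a_2+ib_2)\lambda + (a_3+ib_3)$ with $a_1 = -\bar\xi(1+N\tilde h)$, $b_1 = -(a+\varepsilon)$, $a_2 = -\varepsilon(a - \tilde h M)$, $b_2 = \bar\xi(a+\varepsilon)$, $a_3 = a\varepsilon\bar\xi$, $b_3 = 0$ (the cubic of the linearized landscape evolution system with creep coefficient $\bar K = 0$), and let $\Delta_6$ be its $6\times 6$ Hurwitz determinant $$\Delta_6 = \det\begin{pmatrix} 1 & a_1 & a_2 & a_3 & 0 & 0\\ 0 & b_1 & b_2 & b_3 & 0 & 0\\ 0 & 1 & a_1 & a_2 & a_3 & 0\\ 0 & 0 & b_1 & b_2 & b_3 & 0\\ 0 & 0 & 1 & a_1 &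 a_2 & a_3\\ 0 & 0 & 0 & b_1 & b_2 & b_3\end{pmatrix}.$$ Then $$-\Delta_6 = a\,\tilde h\,\varepsilon\,\bar\xi^2\,(a+\varepsilon)^3\,(N\bar\xi^2 - M\varepsilon).$$ -/
open Polynomial

noncomputable section

/-- The third (6×6) Hurwitz determinant of a complex cubic
`Q = X³ + (a₁ + i b₁) X² + (a₂ + i b₂) X + (a₃ + i b₃)`, with `a_k`, `b_k` the real and imaginary
parts of the coefficient of `X^(3-k)`. -/
def hurwitzDelta6 (Q : ℂ[X]) : ℝ :=
  let a₁ := (Q.coeff 2).re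
  let b₁ := (Q.coeff 2).im
  let a₂ := (Q.coeff 1).re
  let b₂ := (Q.coeff 1).im
  let a₃ := (Q.coeff 0).re
  let b₃ := (Q.coeff 0).im
  Matrix.det !![(1 : ℝ), a₁, a₂, a₃, 0, 0;
                0, b₁, b₂, b₃, 0, 0;
                0, 1, a₁, a₂, a₃, 0;
                0, 0, b₁, b₂, b₃, 0;
                0, 0, 1, a₁, a₂, a₃;
                0, 0, 0, b₁, b₂, b₃]

/-- The cubic `Q(λ)` of the linearized landscape evolution system without creep (`K̄ = 0`).
Here `ht` is `h̃`, `xib` is `ξ̄`, `eps` is `ε`, and `⟨x, y⟩` is the complex number `x + i y`. -/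
def noCreepCubic (a ht M N xib eps : ℝ) : ℂ[X] :=
  X ^ 3 + C (⟨-(xib * (1 + N * ht)), -(a + eps)⟩ : ℂ) * X ^ 2
    + C (⟨-(eps * (a - ht * M)), xib * (a + eps)⟩ : ℂ) * X
    + C (⟨a * eps * xib, 0⟩ : ℂ)

end

/-- The third Hurwitz determinant of a complex cubic whose constant coefficient is real. -/
theorem hurwitzDelta6_of_coeff_zero_im_eq_zero {Q : ℂ[X]} (h : (Q.coeff 0).im = 0) :
    hurwitzDelta6 Q = -(Q.coeff 0).re *
      ((Q.coeff 2).re * (Q.coeff 2).im * (Q.coeff 1).im ^ 2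
        - (Q.coeff 1).re * (Q.coeff 2).im ^ 2 * (Q.coeff 1).im
        + (Q.coeff 0).re * (Q.coeff 2).im ^ 3 - (Q.coeff 1).im ^ 3) := by
  simp only [hurwitzDelta6, h]
  generalize (Q.coeff 2).re = a₁, (Q.coeff 2).im = b₁, (Q.coeff 1).re = a₂,
    (Q.coeff 1).im = b₂, (Q.coeff 0).re = a₃
  simp [Matrix.det_succ_row_zero, Fin.sum_univ_succ, Fin.succAbove]
  ring

theorem noCreepCubic_coeff_two (a ht M N xib eps : ℝ) :
    (noCreepCubic a ht M N xib eps).coeff 2 = ⟨-(xib * (1 + N * ht)), -(a + eps)⟩ := by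
  simp [noCreepCubic, coeff_X_pow]

theorem noCreepCubic_coeff_one (a ht M N xib eps : ℝ) :
    (noCreepCubic a ht M N xib eps).coeff 1 = ⟨-(eps * (a - ht * M)), xib * (a + eps)⟩ := by
  simp [noCreepCubic, coeff_C, coeff_X_pow]

theorem noCreepCubic_coeff_zero (a ht M N xib eps : ℝ) :
    (noCreepCubic a ht M N xib eps).coeff 0 = ⟨a * eps * xib, 0⟩ := by
  simp [noCreepCubic]

/-- Explicit evaluation of the third Hurwitz determinant of the cubic of the linearized landscape
evolution system without creep: `−Δ₆ = a·h̃·ε·ξ̄²·(a+ε)³·(N ξ̄² − M ε)`. -/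
theorem hurwitz_delta6_no_creep (a ht M N xib eps : ℝ)
    (ha : 0 < a) (hht : 0 < ht) (hM : 0 < M) (hN : 0 < N) (heps : 0 < eps) :
    -hurwitzDelta6 (noCreepCubic a ht M N xib eps) =
      a * ht * eps * xib ^ 2 * (a + eps) ^ 3 * (N * xib ^ 2 - M * eps) := by
  rw [hurwitzDelta6_of_coeff_zero_im_eq_zero (by rw [noCreepCubic_coeff_zero]),
    noCreepCubic_coeff_two, noCreepCubic_coeff_one, noCreepCubic_coeff_zero]
  ring
end
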